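/- arXiv:2206.01686 — 2 statements merged into one kernel-verified Lean document; each statement's English description precedes it below -/
import Mathlib

section
/- Covariance expansion for the Mandelbrot–van Ness kernel (Lemma 3.1). Let H ∈ (0,1), H ≠ 1/2, and let K_H(t,s) := (t − s)_+^{H − 1/2} − (−s)_+^{H − 1/2}. There exists a constant C_H depending only on H such that for all 0 ≤ v < s ≤ t with t − s ≤ s − v: | ∫_v^s K_H(s,r) K_H(t,r) dr − ( (1/(2H)) (s − v)^{2H} + (1/2)(s − v)^{2H − 1}(t − s) − (c_H/2)(t − s)^{2H} ) | ≤ C_H (s − v)^{2H − 2}(t − s)^2, where c_H := ((3/2 − H)/(2H)) · ∫_0^1 u^{(2 − 2H) − 1}(1 − u)^{(H + 1/2) − 1} du. -/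
open MeasureTheory intervalIntegral

/-- The Mandelbrot–van Ness kernel `K_H(t,s) = (t − s)_+^{H − 1/2} − (−s)_+^{H − 1/2}`. -/
noncomputable def mvnKernel (H t s : ℝ) : ℝ :=
  max (t - s) 0 ^ (H - 1 / 2) - max (-s) 0 ^ (H - 1 / 2)

/-- The fractional Brownian variance constant
`c_H = ((3/2 − H)/(2H)) · B(2 − 2H, H + 1/2)`. -/
noncomputable def fbmConst (H : ℝ) : ℝ :=
  ((3 / 2 - H) / (2 * H)) * ∫ u in (0:ℝ)..1, u ^ ((2 - 2 * H) - 1) * (1 - u) ^ ((H + 1 / 2) - 1)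

lemma bern_neg (e p : ℝ) (he : 0 ≤ e) (hp : p < 0) (hp' : -2 ≤ p) : 1 + p*e ≤ (1+e)^p := by
  have h1e : 0 < 1 + e := by linarith
  have hu := rpow_one_add_le_one_add_mul_self (s := e) (p := -p/2) (by linarith) (by linarith) (by linarith)
  have hpos : 0 < (1+e)^(-p/2) := Real.rpow_pos_of_pos h1e _
  have h2 : (1+e)^p * ((1+e)^(-p/2) * (1+e)^(-p/2)) = 1 := by
    rw [← Real.rpow_add h1e, ← Real.rpow_add h1e]; ring_nf; simp
  have h3 : (1+e)^(-p/2) * (1+e)^(-p/2) ≤ (1 + -p/2*e) * (1 + -p/2*e) :=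
    mul_le_mul hu hu hpos.le (hpos.le.trans hu)
  have hX : 0 < (1+e)^p := Real.rpow_pos_of_pos h1e _
  by_contra hc
  push Not at hc
  set q := -p/2*e with hq
  have hq0 : 0 ≤ q := by rw [hq]; apply mul_nonneg <;> linarith
  have hc' : (1+e)^p < 1 - 2*q := by rw [hq]; linarith
  have h4 : (1+e)^p * ((1+q)*(1+q)) < (1-2*q)*((1+q)*(1+q)) := by
    apply mul_lt_mul_of_pos_right hc'; positivity
  have h5 := mul_le_mul_of_nonneg_left h3 hX.le
  nlinarith [sq_nonneg q, mul_nonneg hq0 (sq_nonneg q)]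

lemma taylor1 (a e : ℝ) (ha1 : -1/2 < a) (ha2 : a < 1/2) (he : 0 ≤ e) :
    |(1+e)^a - 1 - a*e| ≤ e^2 := by
  have h1e : 0 < 1 + e := by linarith
  rw [abs_le]
  rcases le_or_gt 0 a with h | h
  · have hu := rpow_one_add_le_one_add_mul_self (s := e) (by linarith) h (by linarith)
    have hl := bern_neg e (a - 1) he (by linarith) (by linarith)
    have : (1+e)^a = (1+e) * (1+e)^(a-1) := by
      rw [Real.rpow_sub_one h1e.ne']; field_simp
    constructor
    · rw [this]; nlinarith [mul_le_mul_of_nonneg_left hl h1e.le, mul_nonneg h (sq_nonneg e)]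
    · nlinarith [sq_nonneg e]
  · have hl := bern_neg e (a) he h (by linarith)
    have hu := rpow_one_add_le_one_add_mul_self (s := e) (p := a + 1) (by linarith) (by linarith) (by linarith)
    rw [Real.rpow_add_one h1e.ne'] at hu
    constructor
    · nlinarith [sq_nonneg e]
    · by_contra hc
      push Not at hc
      have : (1 + a*e + e^2) * (1+e) < (1+e)^a * (1+e) := by
        apply mul_lt_mul_of_pos_right _ h1e; linarith
      nlinarith [sq_nonneg e, mul_nonneg he (sq_nonneg e), mul_nonneg (by linarith : 0 ≤ a + 1) (sq_nonneg e)]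

lemma taylor0 (a e : ℝ) (ha1 : -1/2 < a) (ha2 : a < 1/2) (he : 0 ≤ e) :
    |(1+e)^(a-1) - 1| ≤ 2 * e := by
  have hl := bern_neg e (a - 1) he (by linarith) (by linarith)
  have hu : (1+e)^(a-1) ≤ 1 := Real.rpow_le_one_of_one_le_of_nonpos (by linarith) (by linarith)
  rw [abs_le]; constructor <;> nlinarith

lemma f_int (p q : ℝ) (hp : -1 < p) (hq : -1 < q) :
    IntervalIntegrable (fun u : ℝ => u^p * (1-u)^q) volume 0 1 := by
  have h1 : ∀ p q : ℝ, -1 < p → IntervalIntegrable (fun u : ℝ => u^p * (1-u)^q) volume 0 (1/2) := by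
    intro p q hp
    apply (intervalIntegral.intervalIntegrable_rpow' hp).mul_continuousOn
    intro u hu
    rw [Set.uIcc_of_le (by norm_num)] at hu
    apply ContinuousAt.continuousWithinAt
    have : (1 - u) ≠ 0 := by have := hu.2; intro h; linarith
    exact ContinuousAt.rpow_const (by fun_prop) (Or.inl this)
  refine (h1 p q hp).trans ?_
  have := (h1 q p hq).comp_sub_left 1
  norm_num at this
  refine IntervalIntegrable.congr ?_ this.symm
  intro u _
  simp [mul_comm]

lemma g_int (a h L : ℝ) (ha : -1 < a) (hh : 0 < h) (hL : 0 ≤ L) :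
    IntervalIntegrable (fun x : ℝ => x^a * (x+h)^a) volume 0 L := by
  apply (intervalIntegral.intervalIntegrable_rpow' ha).mul_continuousOn
  intro u hu
  rw [Set.uIcc_of_le hL] at hu
  apply ContinuousAt.continuousWithinAt
  have : (u + h) ≠ 0 := by have := hu.1; intro h; linarith
  exact ContinuousAt.rpow_const (by fun_prop) (Or.inl this)

lemma key_id (a h L : ℝ) (ha1 : -1/2 < a) (ha2 : a < 1/2) (hh : 0 < h) (hL : 0 < L) :
    (2*a+1) * (∫ x in (0:ℝ)..L, x^a * (x+h)^a) = L^(a+1) * (L+h)^a + 1/2*h*(L^(a+1) * (L+h)^(a-1))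
      - (1-a)/2 * h^(2*a+1) * ((∫ u in (0:ℝ)..1, u^(-2*a) * (1-u)^a)
         - ∫ u in (0:ℝ)..(h/(L+h)), u^(-2*a) * (1-u)^a) := by
  set f : ℝ → ℝ := fun u => u^(-2*a) * (1-u)^a with hf
  set g : ℝ → ℝ := fun x => x^a * (x+h)^a with hg
  have hfi : IntervalIntegrable f volume 0 1 := f_int _ _ (by linarith) (by linarith)
  set Φ : ℝ → ℝ := fun y => (2*a+1) * (∫ x in (0:ℝ)..y, g x) - (y^(a+1) * (y+h)^a + 1/2*h*(y^(a+1) * (y+h)^(a-1))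
      - (1-a)/2 * h^(2*a+1) * ((∫ u in (0:ℝ)..1, f u) - ∫ u in (0:ℝ)..(h/(y+h)), f u)) with hΦ
  have hcont : ContinuousOn Φ (Set.Icc 0 L) := by
    have c1 : ContinuousOn (fun y => ∫ x in (0:ℝ)..y, g x) (Set.Icc 0 L) := by
      have := intervalIntegral.continuousOn_primitive_interval' (g_int a h L (by linarith) hh hL.le) (Set.left_mem_uIcc)
      rwa [Set.uIcc_of_le hL.le] at this
    have c2 : ContinuousOn (fun y => ∫ x in (0:ℝ)..y, f x) (Set.Icc 0 1) := by
      have := intervalIntegral.continuousOn_primitive_interval' hfi (Set.left_mem_uIcc)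
      rwa [Set.uIcc_of_le zero_le_one] at this
    have c3 : ContinuousOn (fun y => ∫ x in (0:ℝ)..(h/(y+h)), f x) (Set.Icc 0 L) := by
      refine c2.comp (f := fun y => h/(y+h)) ?_ ?_
      · refine ContinuousOn.div (by fun_prop) (by fun_prop) ?_
        intro y hy; have := hy.1; positivity
      · intro y hy
        have := hy.1
        exact ⟨by positivity, by rw [div_le_one (by positivity)]; linarith⟩
    have c4 : ∀ b, ContinuousOn (fun y : ℝ => (y+h)^(b:ℝ)) (Set.Icc 0 L) := by
      intro b
      refine ContinuousOn.rpow_const (by fun_prop) ?_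
      intro y hy; left; have := hy.1; positivity
    have c5 : ContinuousOn (fun y : ℝ => y^(a+1)) (Set.Icc 0 L) := by
      refine ContinuousOn.rpow_const (by fun_prop) ?_
      intro y hy; right; linarith
    have := c4 a
    have := c4 (a-1)
    rw [hΦ]
    fun_prop
  have hder : ∀ y ∈ Set.Ioo 0 L, HasDerivAt Φ ((fun _ => (0:ℝ)) y) y := by
    intro y hy
    have hy0 : 0 < y := hy.1
    have hyh : 0 < y + h := by linarith
    have d1 : HasDerivAt (fun y => ∫ x in (0:ℝ)..y, g x) (g y) y := by
      apply intervalIntegral.integral_hasDerivAt_right (g_int a h y (by linarith) hh hy0.le)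
      · have : Measurable g := by rw [hg]; fun_prop
        exact this.stronglyMeasurable.stronglyMeasurableAtFilter
      · exact (ContinuousAt.rpow_const (by fun_prop) (Or.inl hy0.ne')).mul
          (ContinuousAt.rpow_const (by fun_prop) (Or.inl hyh.ne'))
    have w0 : 0 < h/(y+h) := by positivity
    have w1 : h/(y+h) < 1 := by rw [div_lt_one hyh]; linarith
    have d2 : HasDerivAt (fun y => ∫ x in (0:ℝ)..y, f x) (f (h/(y+h))) (h/(y+h)) := by
      apply intervalIntegral.integral_hasDerivAt_right
      · apply hfi.mono_set
        rw [Set.uIcc_of_le w0.le, Set.uIcc_of_le zero_le_one]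
        exact Set.Icc_subset_Icc_right w1.le
      · have : Measurable f := by rw [hf]; fun_prop
        exact this.stronglyMeasurable.stronglyMeasurableAtFilter
      · have w2 : 1 - h/(y+h) ≠ 0 := by linarith
        exact (ContinuousAt.rpow_const (f := fun u : ℝ => u) continuousAt_id (Or.inl w0.ne')).mul
          (ContinuousAt.rpow_const (f := fun u : ℝ => 1 - u) (by fun_prop) (Or.inl w2))
    have d0 : HasDerivAt (fun y => y + h) 1 y := (hasDerivAt_id y).add_const h
    have d3 : HasDerivAt (fun y => h/(y+h)) (-h/(y+h)^2) y := by
      have := (hasDerivAt_const y h).div d0 hyh.ne'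
      refine this.congr_deriv ?_
      rw [zero_mul, zero_sub, mul_one]
    have d4 : HasDerivAt (fun y => ∫ x in (0:ℝ)..(h/(y+h)), f x) (f (h/(y+h)) * (-h/(y+h)^2)) y :=
      HasDerivAt.comp (h := fun y => h/(y+h)) y d2 d3
    have d5 : ∀ b : ℝ, HasDerivAt (fun y => (y+h)^b) (1 * b * (y+h)^(b-1)) y :=
      fun b => d0.rpow_const (Or.inl hyh.ne')
    have d6 : HasDerivAt (fun y : ℝ => y^(a+1)) ((a+1) * y^(a+1-1)) y :=
      Real.hasDerivAt_rpow_const (Or.inl hy0.ne')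
    have D := (d1.const_mul (2*a+1)).sub (((d6.mul (d5 a)).add ((d6.mul (d5 (a-1))).const_mul (1/2*h))).sub
      ((d4.const_sub (∫ u in (0:ℝ)..1, f u)).const_mul ((1-a)/2 * h^(2*a+1))))
    refine HasDerivAt.congr_deriv (f := Φ) D ?_
    have e1 : f (h/(y+h)) = h^(-2*a) * (y^a * (y+h)^a) := by
      have : 1 - h/(y+h) = y/(y+h) := by field_simp; ring
      simp only [hf, this]
      rw [Real.div_rpow hh.le hyh.le, Real.div_rpow hy0.le hyh.le, show -2*a = -a + -a by ring, Real.rpow_add hyh,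
        Real.rpow_neg hyh.le]
      field_simp
    have e2 : h^(2*a+1) * h^(-2*a) = h := by
      rw [← Real.rpow_add hh]; ring_nf; simp
    have e3 : (y+h)^(a-1) = (y+h)^a / (y+h) := Real.rpow_sub_one hyh.ne' _
    have e4 : (y+h)^(a-1-1) = (y+h)^a / (y+h)^2 := by
      rw [Real.rpow_sub_one hyh.ne', e3]; field_simp
    have e5 : y^(a+1) = y^a * y := Real.rpow_add_one hy0.ne' _
    have e6 : (1-a)/2 * h^(2*a+1) * -(h^(-2*a) * (y^a * (y+h)^a) * (-h/(y+h)^2))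
       = (1-a)/2 * h^2 * (y^a * (y+h)^a) / (y+h)^2 := by
      calc _ = (1-a)/2 * (h^(2*a+1) * h^(-2*a)) * h * (y^a * (y+h)^a) / (y+h)^2 := by ring
        _ = _ := by rw [e2]; ring
    rw [e1, e6, e3, e4, e5, add_sub_cancel_right]
    simp only [hg]
    field_simp
    ring
  obtain ⟨c, -, hc⟩ := exists_hasDerivAt_eq_slope Φ (fun _ => 0) hL hcont hder
  have h0 : Φ 0 = 0 := by
    simp only [hΦ]
    rw [Real.zero_rpow (by linarith), zero_add, div_self hh.ne']
    simp
  have hLz : Φ L = 0 := by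
    rw [h0] at hc
    rw [sub_zero, sub_zero, eq_div_iff hL.ne'] at hc
    linarith
  simp only [hΦ] at hLz
  linarith

lemma tail_bound (a w : ℝ) (ha1 : -1/2 < a) (ha2 : a < 1/2) (hw : 0 ≤ w) (hw' : w ≤ 1/2) :
    |∫ u in (0:ℝ)..w, u^(-2*a) * (1-u)^a| ≤ 2 * (w^(1-2*a) / (1-2*a)) := by
  have hint : IntervalIntegrable (fun u : ℝ => u^(-2*a)) volume 0 w :=
    intervalIntegral.intervalIntegrable_rpow' (by linarith)
  have h1 : ∫ u in (0:ℝ)..w, 2 * u^(-2*a) = 2 * (w^(1-2*a) / (1-2*a)) := by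
    rw [intervalIntegral.integral_const_mul, integral_rpow (Or.inl (by linarith)),
      Real.zero_rpow (by linarith)]
    ring_nf
  rw [← h1, ← Real.norm_eq_abs]
  refine intervalIntegral.norm_integral_le_of_norm_le hw ?_ (hint.const_mul 2)
  refine Filter.Eventually.of_forall fun u hu => ?_
  have hu0 := hu.1
  have hu1 : u ≤ 1/2 := hu.2.trans hw'
  have hb : (1-u)^a ≤ 2 := by
    calc (1-u)^a ≤ (1-u)^(-1:ℝ) := Real.rpow_le_rpow_of_exponent_ge (by linarith) (by linarith) (by linarith)
      _ = (1-u)⁻¹ := Real.rpow_neg_one _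
      _ ≤ (1/2)⁻¹ := by apply inv_anti₀ <;> linarith
      _ = 2 := by norm_num
  have hp : 0 ≤ u^(-2*a) := Real.rpow_nonneg hu0.le _
  have hq : 0 ≤ (1-u)^a := Real.rpow_nonneg (by linarith) _
  rw [Real.norm_eq_abs, abs_of_nonneg (mul_nonneg hp hq)]
  nlinarith

lemma expansion (a h L : ℝ) (ha1 : -1/2 < a) (ha2 : a < 1/2) (hh : 0 < h) (hL : h ≤ L) :
    |(2*a+1) * (∫ x in (0:ℝ)..L, x^a * (x+h)^a) - (L^(2*a+1) + (2*a+1)/2*L^(2*a)*h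
      - (1-a)/2 * (∫ u in (0:ℝ)..1, u^(-2*a) * (1-u)^a) * h^(2*a+1))|
      ≤ (2 + 2/(1-2*a)) * (L^(2*a-1)*h^2) := by
  have hL0 : 0 < L := by linarith
  have hLh : 0 < L + h := by linarith
  rw [key_id a h L ha1 ha2 hh hL0]
  have t1 := taylor1 a (h/L) ha1 ha2 (by positivity)
  have t0 := taylor0 a (h/L) ha1 ha2 (by positivity)
  have tb := tail_bound a (h/(L+h)) ha1 ha2 (by positivity)
    (by rw [div_le_iff₀ hLh]; linarith)
  set B := ∫ u in (0:ℝ)..1, u^(-2*a) * (1-u)^a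
  set T := ∫ u in (0:ℝ)..(h/(L+h)), u^(-2*a) * (1-u)^a
  have hLe : L + h = L * (1 + h/L) := by field_simp
  have hee : 0 < 1 + h/L := by positivity
  have e1 : L^(a+1) * (L+h)^a = L^(2*a-1) * L^2 * (1+h/L)^a := by
    rw [hLe, Real.mul_rpow hL0.le hee.le, ← mul_assoc, ← Real.rpow_add hL0, ← Real.rpow_natCast, ← Real.rpow_add hL0]
    congr 2; push_cast; ring
  have e2 : L^(a+1) * (L+h)^(a-1) = L^(2*a-1) * L * (1+h/L)^(a-1) := by
    rw [hLe, Real.mul_rpow hL0.le hee.le, ← mul_assoc, ← Real.rpow_add hL0, ← Real.rpow_add_one hL0.ne']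
    congr 2; ring
  have e3 : L^(2*a+1) = L^(2*a-1) * L^2 := by
    rw [← Real.rpow_natCast, ← Real.rpow_add hL0]; congr 1; push_cast; ring
  have e4 : L^(2*a) = L^(2*a-1) * L := by
    rw [← Real.rpow_add_one hL0.ne']; congr 1; ring
  rw [e1, e2, e3, e4]
  have hP : 0 < L^(2*a-1) := Real.rpow_pos_of_pos hL0 _
  have e5 : h^(2*a+1) * |T| ≤ 2/(1-2*a) * (L^(2*a-1) * h^2) := by
    have i1 : (h/(L+h))^(1-2*a) ≤ h^(1-2*a) * L^(2*a-1) := by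
      calc _ ≤ (h/L)^(1-2*a) := by
            apply Real.rpow_le_rpow (by positivity) _ (by linarith)
            apply div_le_div_of_nonneg_left hh.le hL0; linarith
        _ = _ := by
            rw [Real.div_rpow hh.le hL0.le, show 2*a-1 = -(1-2*a) by ring, Real.rpow_neg hL0.le]; rfl
    have i2 : h^(2*a+1) * h^(1-2*a) = h^2 := by
      rw [← Real.rpow_add hh, ← Real.rpow_natCast]; congr 1; push_cast; ring
    have hd : 0 < 1 - 2*a := by linarith
    calc h^(2*a+1) * |T| ≤ h^(2*a+1) * (2 * (h^(1-2*a) * L^(2*a-1) / (1-2*a))) := by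
          apply mul_le_mul_of_nonneg_left _ (Real.rpow_nonneg hh.le _)
          refine tb.trans ?_
          gcongr
      _ = 2/(1-2*a) * (L^(2*a-1) * (h^(2*a+1) * h^(1-2*a))) := by ring
      _ = _ := by rw [i2]
  set X := (1+h/L)^a
  set Y := (1+h/L)^(a-1)
  set P := L^(2*a-1)
  have split : P * L^2 * X + 1/2*h*(P*L*Y) - (1-a)/2*h^(2*a+1)*(B-T)
      - (P*L^2 + (2*a+1)/2*(P*L)*h - (1-a)/2*B*h^(2*a+1))
      = P*L^2*(X-1-a*(h/L)) + 1/2*h*(P*L)*(Y-1) + (1-a)/2*(h^(2*a+1)*T) := by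
    field_simp; ring
  rw [split]
  have b1 : |P*L^2*(X-1-a*(h/L))| ≤ P*h^2 := by
    rw [abs_mul, abs_of_pos (by positivity)]
    calc _ ≤ P*L^2*(h/L)^2 := by gcongr
      _ = _ := by field_simp
  have b2 : |1/2*h*(P*L)*(Y-1)| ≤ P*h^2 := by
    rw [abs_mul, abs_of_pos (by positivity)]
    calc _ ≤ 1/2*h*(P*L)*(2*(h/L)) := by gcongr
      _ = _ := by field_simp
  have b3 : |(1-a)/2*(h^(2*a+1)*T)| ≤ 2/(1-2*a) * (P * h^2) := by
    rw [abs_mul, abs_mul, abs_of_pos (by linarith : 0 < (1-a)/2), abs_of_nonneg (Real.rpow_nonneg hh.le _)]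
    have : 0 ≤ h^(2*a+1) * |T| := mul_nonneg (Real.rpow_nonneg hh.le _) (abs_nonneg _)
    nlinarith
  refine (abs_add_three _ _ _).trans ?_
  linarith


/-- **Covariance expansion for the Mandelbrot–van Ness kernel** (Lemma 3.1). For
`H ∈ (0,1)`, `H ≠ 1/2`, there is a constant `C_H` depending only on `H` such that for all
`0 ≤ v < s ≤ t` with `t − s ≤ s − v`:
`|∫_v^s K_H(s,r) K_H(t,r) dr − ((1/(2H))(s−v)^{2H} + (1/2)(s−v)^{2H−1}(t−s)
  − (c_H/2)(t−s)^{2H})| ≤ C_H (s−v)^{2H−2}(t−s)^2`. -/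
theorem mvnKernel_covariance_expansion
    (H : ℝ) (hH0 : 0 < H) (hH1 : H < 1) (hH : H ≠ 1 / 2) :
    ∃ C : ℝ, 0 ≤ C ∧
    ∀ v s t : ℝ, 0 ≤ v → v < s → s ≤ t → t - s ≤ s - v →
      |(∫ r in v..s, mvnKernel H s r * mvnKernel H t r)
          - ((1 / (2 * H)) * (s - v) ^ (2 * H)
            + (1 / 2) * (s - v) ^ (2 * H - 1) * (t - s)
            - (fbmConst H / 2) * (t - s) ^ (2 * H))|
        ≤ C * (s - v) ^ (2 * H - 2) * (t - s) ^ (2 : ℕ) := by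
  refine ⟨(2 + 2/(1-2*(H-1/2))) / (2*H), ?_, ?_⟩
  · have : 0 < 1-2*(H-1/2) := by linarith
    positivity
  intro v s t hv hvs hst hts
  have hI : (∫ r in v..s, mvnKernel H s r * mvnKernel H t r)
      = ∫ x in (0:ℝ)..(s-v), x^(H-1/2) * (x+(t-s))^(H-1/2) := by
    have := intervalIntegral.integral_comp_sub_left (a := v) (b := s)
      (fun x : ℝ => x^(H-1/2) * (x+(t-s))^(H-1/2)) s
    rw [sub_self] at this
    rw [← this]
    apply intervalIntegral.integral_congr
    intro r hr
    rw [Set.uIcc_of_le hvs.le] at hr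
    have h1 := hr.1
    have h2 := hr.2
    simp only [mvnKernel]
    rw [max_eq_left (by linarith : 0 ≤ s - r), max_eq_left (by linarith : 0 ≤ t - r),
      max_eq_right (by linarith : -r ≤ 0), Real.zero_rpow (sub_ne_zero.mpr hH), sub_zero, sub_zero,
      show s - r + (t - s) = t - r by ring]
  rw [hI]
  have hL : 0 < s - v := by linarith
  have hh0 : 0 ≤ t - s := by linarith
  generalize s - v = L at *
  generalize t - s = h at *
  rcases hh0.eq_or_lt with rfl | hh
  · have : (∫ x in (0:ℝ)..L, x^(H-1/2) * (x+0)^(H-1/2)) = 1/(2*H) * L^(2*H) := by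
      have e : (∫ x in (0:ℝ)..L, x^(H-1/2) * (x+0)^(H-1/2)) = ∫ x in (0:ℝ)..L, x^(2*H-1) := by
        apply intervalIntegral.integral_congr_ae
        refine Filter.Eventually.of_forall fun x hx => ?_
        rw [Set.uIoc_of_le hL.le] at hx
        rw [add_zero, ← Real.rpow_add hx.1]
        congr 1; ring
      rw [e, integral_rpow (Or.inl (by linarith)), Real.zero_rpow (by linarith)]
      ring_nf
    rw [this, Real.zero_rpow (by linarith)]
    simp
  · have E := expansion (H-1/2) h L (by linarith) (by linarith) hh hts
    have hB : fbmConst H = (3/2-H)/(2*H) * ∫ u in (0:ℝ)..1, u^(-2*(H-1/2)) * (1-u)^(H-1/2) := by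
      unfold fbmConst
      rw [show (2-2*H)-1 = -2*(H-1/2) by ring, show (H+1/2)-1 = H-1/2 by ring]
    rw [hB]
    rw [show 2*(H-1/2)+1 = 2*H by ring, show 2*(H-1/2)-1 = 2*H-2 by ring] at E
    rw [show (2*H-1 : ℝ) = 2*(H-1/2) by ring]
    generalize (∫ u in (0:ℝ)..1, u^(-2*(H-1/2)) * (1-u)^(H-1/2)) = B at *
    generalize (∫ x in (0:ℝ)..L, x^(H-1/2) * (x+h)^(H-1/2)) = F at *
    have h2 : 0 < 2*H := by linarith
    rw [show ∀ D Q : ℝ, D / (2*H) * Q * h^2 = (D * (Q * h^2)) / (2*H) from fun D Q => by ring,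
      le_div_iff₀ h2]
    refine le_trans (le_of_eq ?_) E
    rw [show ∀ Z : ℝ, |Z| * (2*H) = |Z * (2*H)| from fun Z => by rw [abs_mul, abs_of_pos h2]]
    congr 1
    field_simp
    ring
end

section
/- Improved derivative bounds for the Gaussian smoothing of a Hölder function (used in the proof of Proposition 3.3). Let d ∈ ℕ, γ ∈ (0,1), let γ_d denote the standard Gaussian measure on ℝ^d, let f : ℝ^d → ℝ^d be γ-Hölder continuous, and define F(m, σ) := ∫_{ℝ^d} f(m + σx) dγ_d(x) for m ∈ ℝ^d and σ > 0. Then there exists a constant C_{d,γ} depending only on d and γ such that for all m ∈ ℝ^d and σ > 0: |∂_{m_i} F(m,σ)| ≤ C_{d,γ} ‖f‖_{C^γ} σ^{γ − 1} for each i = 1,…,d, and |∂_σ F(m,σ)| ≤ C_{d,γ} ‖f‖_{C^γ} σ^{γ − 1}. -/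
open MeasureTheory

/-- The standard Gaussian measure on `ℝ^d` (as `EuclideanSpace ℝ (Fin d)`), with density
`(2π)^{−d/2} e^{−‖x‖²/2}` with respect to Lebesgue measure. -/
noncomputable def stdGaussian (d : ℕ) : Measure (EuclideanSpace ℝ (Fin d)) :=
  volume.withDensity fun x =>
    ENNReal.ofReal ((2 * Real.pi) ^ (-(d : ℝ) / 2) * Real.exp (-‖x‖ ^ 2 / 2))

/-- Normalising constant. -/
noncomputable def gsC (d : ℕ) : ℝ := (2 * Real.pi) ^ (-(d : ℝ) / 2)

lemma gsC_nonneg (d : ℕ) : 0 ≤ gsC d := by unfold gsC; positivity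

/-- Gaussian kernel with mean `p.1` and standard deviation `p.2`. -/
noncomputable def gsKer (d : ℕ) (p : EuclideanSpace ℝ (Fin d) × ℝ)
    (y : EuclideanSpace ℝ (Fin d)) : ℝ :=
  gsC d * (p.2⁻¹) ^ d * Real.exp (-((p.2⁻¹) ^ 2 * ‖y - p.1‖ ^ 2) / 2)

/-- Derivative of the kernel in `p`. -/
noncomputable def gsKer' (d : ℕ) (p : EuclideanSpace ℝ (Fin d) × ℝ)
    (y : EuclideanSpace ℝ (Fin d)) : (EuclideanSpace ℝ (Fin d) × ℝ) →L[ℝ] ℝ :=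
  gsKer d p y • ((-(d : ℝ) * p.2⁻¹ + p.2⁻¹ ^ 3 * ‖y - p.1‖ ^ 2) •
      ContinuousLinearMap.snd ℝ (EuclideanSpace ℝ (Fin d)) ℝ +
    (p.2⁻¹ ^ 2) • (innerSL ℝ (y - p.1)).comp
      (ContinuousLinearMap.fst ℝ (EuclideanSpace ℝ (Fin d)) ℝ))

lemma gsKer_hasFDerivAt (d : ℕ) (p : EuclideanSpace ℝ (Fin d) × ℝ)
    (y : EuclideanSpace ℝ (Fin d)) (hp : p.2 ≠ 0) :
    HasFDerivAt (fun p => gsKer d p y) (gsKer' d p y) p := by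
  have h1 : HasFDerivAt (fun p : EuclideanSpace ℝ (Fin d) × ℝ => p.2⁻¹)
      ((-(p.2 ^ 2)⁻¹) • ContinuousLinearMap.snd ℝ (EuclideanSpace ℝ (Fin d)) ℝ) p :=
    (hasDerivAt_inv hp).comp_hasFDerivAt p hasFDerivAt_snd
  have h2 : HasFDerivAt (fun p : EuclideanSpace ℝ (Fin d) × ℝ => ‖y - p.1‖ ^ 2) _ p :=
    ((hasFDerivAt_fst (p := p)).const_sub y).norm_sq
  have h3 := (((h1.pow 2).mul h2).neg.mul_const (2⁻¹ : ℝ)).exp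
  have h4 := ((h1.pow d).const_mul (gsC d)).mul h3
  refine (h4.congr_fderiv ?_).congr_of_eventuallyEq (Filter.Eventually.of_forall fun q => ?_)
  · ext v
    · simp [gsKer', gsKer, div_eq_mul_inv]
      ring
    · rcases d with _ | d
      · simp [gsKer', gsKer, div_eq_mul_inv]
        ring
      · simp [gsKer', gsKer, div_eq_mul_inv]
        ring
  · simp [gsKer, div_eq_mul_inv]

lemma gsKer_le (d : ℕ) (p : EuclideanSpace ℝ (Fin d) × ℝ)
    (y : EuclideanSpace ℝ (Fin d)) (hp : p ∈ Metric.ball ((0, 1) : EuclideanSpace ℝ (Fin d) × ℝ) (1/2)) :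
    0 ≤ gsKer d p y ∧ gsKer d p y ≤ gsC d * 2 ^ d * (Real.exp 1 * Real.exp (-‖y‖ ^ 2 / 9)) ∧
    0 < p.2 ∧ p.2⁻¹ ≤ 2 ∧ ‖y - p.1‖ ^ 2 ≤ 2 * ‖y‖ ^ 2 + 1 / 2 := by
  rw [Metric.mem_ball, Prod.dist_eq, max_lt_iff, dist_zero_right, Real.dist_eq, abs_lt] at hp
  obtain ⟨hh, ht1, ht2⟩ := hp
  simp only at hh ht1 ht2
  have hpos : 0 < p.2 := by linarith
  have hu : p.2⁻¹ ≤ 2 := by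
    rw [inv_le_comm₀ hpos (by norm_num)]; linarith
  have hl : 2 / 3 ≤ p.2⁻¹ := by
    rw [le_inv_comm₀ (by norm_num) hpos]; norm_num; linarith
  have hC := gsC_nonneg d
  have n1 : ‖y - p.1‖ ≤ ‖y‖ + ‖p.1‖ := norm_sub_le _ _
  have n2 : ‖y‖ ≤ ‖y - p.1‖ + ‖p.1‖ := by
    simpa using norm_add_le (y - p.1) p.1
  have e0 := norm_nonneg y
  have e1 := norm_nonneg p.1
  have e2 := norm_nonneg (y - p.1)
  refine ⟨by unfold gsKer; positivity, ?_, hpos, hu, ?_⟩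
  · unfold gsKer
    rw [← Real.exp_add]
    gcongr
    have : ‖y‖ ^ 2 ≤ 2 * ‖y - p.1‖ ^ 2 + 1 / 2 := by
      nlinarith [sq_nonneg (‖y - p.1‖ - ‖p.1‖)]
    have h4 : (2 / 3) ^ 2 ≤ p.2⁻¹ ^ 2 := by gcongr
    nlinarith [mul_le_mul_of_nonneg_right h4 (sq_nonneg ‖y - p.1‖)]
  · nlinarith [sq_nonneg (‖y‖ - ‖p.1‖)]

/-- Constant in the bound. -/
noncomputable def gsB (d : ℕ) : ℝ :=
  gsC d * 2 ^ d * Real.exp 1 * ((2 * d + 10) * 2)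

lemma gsB_nonneg (d : ℕ) : 0 ≤ gsB d := by
  have := gsC_nonneg d
  unfold gsB; positivity

lemma gsKer'_le (d : ℕ) (p : EuclideanSpace ℝ (Fin d) × ℝ)
    (y : EuclideanSpace ℝ (Fin d)) (hp : p ∈ Metric.ball ((0, 1) : EuclideanSpace ℝ (Fin d) × ℝ) (1/2)) :
    ‖gsKer' d p y‖ ≤ gsB d * ((1 + ‖y‖ ^ 2) * Real.exp (-‖y‖ ^ 2 / 9)) := by
  obtain ⟨k0, k1, hpos, hu, hr⟩ := gsKer_le d p y hp
  have hu0 : 0 < p.2⁻¹ := inv_pos.2 hpos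
  unfold gsKer'
  rw [norm_smul, Real.norm_of_nonneg k0]
  have hb : ‖((-(d : ℝ) * p.2⁻¹ + p.2⁻¹ ^ 3 * ‖y - p.1‖ ^ 2) •
      ContinuousLinearMap.snd ℝ (EuclideanSpace ℝ (Fin d)) ℝ +
    (p.2⁻¹ ^ 2) • (innerSL ℝ (y - p.1)).comp
      (ContinuousLinearMap.fst ℝ (EuclideanSpace ℝ (Fin d)) ℝ))‖ ≤
      (d * 2 + 2 ^ 3 * ‖y - p.1‖ ^ 2) * 1 + 2 ^ 2 * (‖y - p.1‖ * 1) := by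
    refine (norm_add_le _ _).trans (add_le_add ?_ ?_)
    · rw [norm_smul]
      refine mul_le_mul ?_ (ContinuousLinearMap.norm_snd_le ..) (norm_nonneg _) (by positivity)
      refine (norm_add_le _ _).trans (add_le_add ?_ ?_)
      · rw [norm_mul, norm_neg, Real.norm_of_nonneg (Nat.cast_nonneg d), Real.norm_of_nonneg hu0.le]
        gcongr
      · rw [Real.norm_of_nonneg (by positivity)]
        gcongr
    · rw [norm_smul, Real.norm_of_nonneg (by positivity)]
      refine mul_le_mul (by gcongr) ?_ (norm_nonneg _) (by positivity)
      refine (ContinuousLinearMap.opNorm_comp_le _ _).trans ?_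
      refine mul_le_mul ?_ (ContinuousLinearMap.norm_fst_le ..) (norm_nonneg _) (norm_nonneg _)
      exact (innerSL_apply_norm _ _).le
  have hb2 : (d * 2 + 2 ^ 3 * ‖y - p.1‖ ^ 2) * 1 + 2 ^ 2 * (‖y - p.1‖ * 1) ≤
      ((2 * d + 10) * 2) * (1 + ‖y‖ ^ 2) := by
    have : (0:ℝ) ≤ d := Nat.cast_nonneg d
    have h0 : 0 ≤ (d : ℝ) * ‖y‖ ^ 2 := by positivity
    nlinarith [sq_nonneg (‖y - p.1‖ - 1)]
  refine (mul_le_mul k1 (hb.trans hb2) (norm_nonneg _) (k0.trans k1)).trans (le_of_eq ?_)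
  unfold gsB; ring

lemma gs_integrable_exp (d : ℕ) (b : ℝ) (hb : 0 < b) :
    Integrable (fun y : EuclideanSpace ℝ (Fin d) => Real.exp (-b * ‖y‖ ^ 2)) := by
  have h := (GaussianFourier.integrable_cexp_neg_mul_sq_norm_add
    (V := EuclideanSpace ℝ (Fin d)) (b := (b : ℂ)) (by simpa using hb) 0 0).norm
  refine h.congr (Filter.Eventually.of_forall fun y => ?_)
  simp [Complex.norm_exp, ← Complex.ofReal_pow, ← Complex.ofReal_mul]

/-- The weight dominating everything. -/
noncomputable def gsW (d : ℕ) (y : EuclideanSpace ℝ (Fin d)) : ℝ :=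
  (1 + ‖y‖) * ((1 + ‖y‖ ^ 2) * Real.exp (-‖y‖ ^ 2 / 9))

lemma gsW_nonneg (d : ℕ) (y) : 0 ≤ gsW d y := by unfold gsW; positivity

lemma gsW_integrable (d : ℕ) : Integrable (gsW d) := by
  have h := (gs_integrable_exp d (1/18) (by norm_num)).const_mul (72 * 36)
  refine h.mono' (Continuous.aestronglyMeasurable (by unfold gsW; fun_prop))
    (Filter.Eventually.of_forall fun y => ?_)
  rw [Real.norm_of_nonneg (gsW_nonneg d y)]
  have e : Real.exp (-(1/18) * ‖y‖ ^ 2) =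
      Real.exp (‖y‖ ^ 2 / 36) * (Real.exp (‖y‖ ^ 2 / 36) * Real.exp (-‖y‖ ^ 2 / 9)) := by
    rw [← Real.exp_add, ← Real.exp_add]; congr 1; ring
  have h1 : ‖y‖ ^ 2 / 36 + 1 ≤ Real.exp (‖y‖ ^ 2 / 36) := Real.add_one_le_exp _
  have h2 : 1 + ‖y‖ ≤ 72 * Real.exp (‖y‖ ^ 2 / 36) := by nlinarith [sq_nonneg (‖y‖ - 1)]
  have h3 : 1 + ‖y‖ ^ 2 ≤ 36 * Real.exp (‖y‖ ^ 2 / 36) := by nlinarith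
  rw [e]
  calc gsW d y ≤ (72 * Real.exp (‖y‖ ^ 2 / 36)) *
        ((36 * Real.exp (‖y‖ ^ 2 / 36)) * Real.exp (-‖y‖ ^ 2 / 9)) := by
        unfold gsW; gcongr
    _ = _ := by ring

lemma gs_integral_std (d : ℕ) (g : EuclideanSpace ℝ (Fin d) → EuclideanSpace ℝ (Fin d)) :
    ∫ x, g x ∂(stdGaussian d) = ∫ x, (gsC d * Real.exp (-‖x‖ ^ 2 / 2)) • g x := by
  unfold stdGaussian
  rw [integral_withDensity_eq_integral_toReal_smul (by fun_prop)
    (Filter.Eventually.of_forall fun x => ENNReal.ofReal_lt_top)]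
  refine integral_congr_ae (Filter.Eventually.of_forall fun x => ?_)
  have := gsC_nonneg d
  simp only
  rw [ENNReal.toReal_ofReal (by positivity)]
  rfl

lemma gs_finite (d : ℕ) : IsFiniteMeasure (stdGaussian d) := by
  unfold stdGaussian
  refine isFiniteMeasure_withDensity_ofReal ?_
  refine Integrable.hasFiniteIntegral ?_
  refine ((gs_integrable_exp d (1/2) (by norm_num)).const_mul (gsC d)).congr
    (Filter.Eventually.of_forall fun y => ?_)
  have e : -(1 / 2) * ‖y‖ ^ 2 = -‖y‖ ^ 2 / 2 := by ring
  simp only [e, gsC]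

lemma gs_change (d : ℕ) (g : EuclideanSpace ℝ (Fin d) → EuclideanSpace ℝ (Fin d))
    (p : EuclideanSpace ℝ (Fin d) × ℝ) (hp : 0 < p.2) :
    ∫ x, g (p.1 + p.2 • x) ∂(stdGaussian d) = ∫ y, gsKer d p y • g y := by
  rw [gs_integral_std]
  set Φ : EuclideanSpace ℝ (Fin d) → EuclideanSpace ℝ (Fin d) :=
    fun y => (gsC d * Real.exp (-((p.2⁻¹) ^ 2 * ‖y - p.1‖ ^ 2) / 2)) • g y with hΦ
  have h1 : ∀ x, (gsC d * Real.exp (-‖x‖ ^ 2 / 2)) • g (p.1 + p.2 • x) =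
      (fun z => Φ (p.1 + z)) (p.2 • x) := by
    intro x
    simp only [hΦ, add_sub_cancel_left, norm_smul, mul_pow, Real.norm_of_nonneg hp.le]
    rw [← mul_assoc, ← mul_pow, inv_mul_cancel₀ hp.ne', one_pow, one_mul]
  simp_rw [h1]
  rw [Measure.integral_comp_smul volume (fun z => Φ (p.1 + z)) p.2, integral_add_left_eq_self, ← integral_smul]
  refine integral_congr_ae (Filter.Eventually.of_forall fun y => ?_)
  simp only [hΦ, smul_smul, gsKer, finrank_euclideanSpace, Fintype.card_fin]
  rw [abs_of_nonneg (by positivity), inv_pow]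
  congr 1; ring

lemma gs_main (d : ℕ) (g : EuclideanSpace ℝ (Fin d) → EuclideanSpace ℝ (Fin d)) (A : ℝ)
    (hg : Continuous g) (hA : ∀ z, ‖g z‖ ≤ A * (1 + ‖z‖)) :
    ∃ G' : (EuclideanSpace ℝ (Fin d) × ℝ) →L[ℝ] EuclideanSpace ℝ (Fin d),
      HasFDerivAt (fun p : EuclideanSpace ℝ (Fin d) × ℝ =>
          ∫ x, g (p.1 + p.2 • x) ∂(stdGaussian d)) G' (0, 1) ∧
      ‖G'‖ ≤ A * (gsB d * ∫ y, gsW d y) := by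
  have hb : ∀ p ∈ Metric.ball ((0, 1) : EuclideanSpace ℝ (Fin d) × ℝ) (1/2), ∀ y,
      ‖(gsKer' d p y).smulRight (g y)‖ ≤ A * (gsB d * gsW d y) := by
    intro p hp y
    rw [ContinuousLinearMap.norm_smulRight_apply]
    refine (mul_le_mul (gsKer'_le d p y hp) (hA y) (norm_nonneg _)
      ((norm_nonneg _).trans (gsKer'_le d p y hp))).trans (le_of_eq ?_)
    unfold gsW; ring
  have hmem : Metric.ball ((0, 1) : EuclideanSpace ℝ (Fin d) × ℝ) (1/2) ∈ nhds (0, 1) :=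
    Metric.ball_mem_nhds _ (by norm_num)
  have hbi : Integrable (fun y => A * (gsB d * gsW d y)) :=
    ((gsW_integrable d).const_mul _).const_mul _
  have hmeas : ∀ p, AEStronglyMeasurable (fun y => gsKer d p y • g y) volume := by
    intro p
    refine Continuous.aestronglyMeasurable ?_
    unfold gsKer; fun_prop
  have hA0 : 0 ≤ A := by simpa using (norm_nonneg _).trans (hA 0)
  have key := hasFDerivAt_integral_of_dominated_of_fderiv_le (μ := volume) (𝕜 := ℝ)
    (F := fun p y => gsKer d p y • g y)
    (F' := fun p y => (gsKer' d p y).smulRight (g y)) (x₀ := (0, 1))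
    (bound := fun y => A * (gsB d * gsW d y))
    hmem (Filter.Eventually.of_forall hmeas) ?_ ?_
    (Filter.Eventually.of_forall fun y p hp => hb p hp y) hbi
    (Filter.Eventually.of_forall fun y p hp =>
      (gsKer_hasFDerivAt d p y (gsKer_le d p y hp).2.2.1.ne').smul_const (g y))
  · refine ⟨_, key.congr_of_eventuallyEq ?_, ?_⟩
    · filter_upwards [hmem] with p hp
      exact gs_change d g p (gsKer_le d p 0 hp).2.2.1
    · rw [← integral_const_mul, ← integral_const_mul]
      exact norm_integral_le_of_norm_le hbi
        (Filter.Eventually.of_forall fun y => hb _ (mem_of_mem_nhds hmem) y)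
  · refine ((gsW_integrable d).const_mul (gsC d * 2 ^ d * Real.exp 1 * A)).mono' (hmeas _)
      (Filter.Eventually.of_forall fun y => ?_)
    obtain ⟨k0, k1, -⟩ := gsKer_le d (0, 1) y (mem_of_mem_nhds hmem)
    rw [norm_smul, Real.norm_of_nonneg k0]
    refine (mul_le_mul k1 (hA y) (norm_nonneg _) (k0.trans k1)).trans ?_
    have hC := gsC_nonneg d
    have : Real.exp (-‖y‖ ^ 2 / 9) ≤ (1 + ‖y‖ ^ 2) * Real.exp (-‖y‖ ^ 2 / 9) :=
      le_mul_of_one_le_left (Real.exp_nonneg _) (by nlinarith [sq_nonneg ‖y‖])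
    calc _ = gsC d * 2 ^ d * Real.exp 1 * A * ((1 + ‖y‖) * Real.exp (-‖y‖ ^ 2 / 9)) := by ring
      _ ≤ _ := by unfold gsW; gcongr
  · refine Continuous.aestronglyMeasurable ?_
    have : Continuous fun y => gsKer' d (0, 1) y := by
      unfold gsKer' gsKer; fun_prop
    exact (ContinuousLinearMap.smulRightL ℝ (EuclideanSpace ℝ (Fin d) × ℝ)
      (EuclideanSpace ℝ (Fin d))).continuous₂.comp (this.prodMk hg)

/-- **Improved derivative bounds for the Gaussian smoothing of a Hölder function** (used in
the proof of Proposition 3.3). For `γ ∈ (0,1)`, `f : ℝ^d → ℝ^d` `γ`-Hölder and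
`F(m,σ) = ∫ f(m + σx) dγ_d(x)`, one has
`|∂_{m_i} F| ≤ C_{d,γ} ‖f‖_{C^γ} σ^{γ−1}` and `|∂_σ F| ≤ C_{d,γ} ‖f‖_{C^γ} σ^{γ−1}` with
`C_{d,γ}` depending only on `d, γ`. The `C^γ` norm is encoded by any bound `Kf` with
`∀ x, ‖f x‖ ≤ Kf` and `∀ x y, ‖f x − f y‖ ≤ Kf ‖x − y‖^γ`. -/
theorem gaussian_smoothing_deriv_bounds_holder
    (d : ℕ) (γ : ℝ) (hγ0 : 0 < γ) (hγ1 : γ < 1) :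
    ∃ C : ℝ, 0 ≤ C ∧
    ∀ f : EuclideanSpace ℝ (Fin d) → EuclideanSpace ℝ (Fin d),
    ∀ Kf : ℝ, (∀ x, ‖f x‖ ≤ Kf) → (∀ x y, ‖f x - f y‖ ≤ Kf * ‖x - y‖ ^ γ) →
    ∀ (m : EuclideanSpace ℝ (Fin d)) (σ : ℝ), 0 < σ →
      DifferentiableAt ℝ
        (fun p : EuclideanSpace ℝ (Fin d) × ℝ =>
          ∫ x, f (p.1 + p.2 • x) ∂(stdGaussian d)) (m, σ) ∧
      (∀ i : Fin d,
        ‖fderiv ℝ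
            (fun p : EuclideanSpace ℝ (Fin d) × ℝ =>
              ∫ x, f (p.1 + p.2 • x) ∂(stdGaussian d)) (m, σ)
            (EuclideanSpace.single i 1, 0)‖ ≤ C * Kf * σ ^ (γ - 1)) ∧
      ‖fderiv ℝ
          (fun p : EuclideanSpace ℝ (Fin d) × ℝ =>
            ∫ x, f (p.1 + p.2 • x) ∂(stdGaussian d)) (m, σ)
          (0, 1)‖ ≤ C * Kf * σ ^ (γ - 1) := by
  have hI : 0 ≤ ∫ y, gsW d y := integral_nonneg (gsW_nonneg d)
  have hB := gsB_nonneg d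
  refine ⟨gsB d * ∫ y, gsW d y, by positivity, ?_⟩
  intro f Kf hf hH m σ hσ
  have hK : 0 ≤ Kf := (norm_nonneg _).trans (hf 0)
  have := gs_finite d
  have hfc : Continuous f := by
    rw [continuous_iff_continuousAt]
    intro x
    rw [ContinuousAt, tendsto_iff_norm_sub_tendsto_zero]
    refine squeeze_zero (fun _ => norm_nonneg _) (fun y => hH y x) ?_
    have : Continuous fun y : EuclideanSpace ℝ (Fin d) => Kf * ‖y - x‖ ^ γ :=
      continuous_const.mul ((by fun_prop : Continuous fun y => ‖y - x‖).rpow_const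
        fun _ => Or.inr hγ0.le)
    have h := this.tendsto x
    simpa [Real.zero_rpow hγ0.ne'] using h
  obtain ⟨G', hG, hGn⟩ := gs_main d (fun z => f (m + σ • z) - f m) (Kf * σ ^ γ)
    (by fun_prop) (by
      intro z
      refine (hH _ _).trans ?_
      rw [add_sub_cancel_left, norm_smul, Real.norm_of_nonneg hσ.le,
        Real.mul_rpow hσ.le (norm_nonneg _), mul_assoc]
      gcongr
      rcases le_total ‖z‖ 1 with h | h
      · exact (Real.rpow_le_one (norm_nonneg _) h hγ0.le).trans (by linarith [norm_nonneg z])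
      · exact (Real.rpow_le_rpow_of_exponent_le h hγ1.le).trans (by simp))
  set L : EuclideanSpace ℝ (Fin d) × ℝ → EuclideanSpace ℝ (Fin d) × ℝ :=
    fun p => σ⁻¹ • (p - (m, 0)) with hL
  have hLd : HasFDerivAt L (σ⁻¹ • ContinuousLinearMap.id ℝ _) (m, σ) :=
    ((hasFDerivAt_id (𝕜 := ℝ) (m, σ)).sub_const (m, (0 : ℝ))).const_smul σ⁻¹
  have hLp : L (m, σ) = (0, 1) := by simp [hL, hσ.ne']
  rw [← hLp] at hG
  have hF := (hG.comp (m, σ) hLd).add_const ((stdGaussian d).real Set.univ • f m)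
  have hfun : (fun p : EuclideanSpace ℝ (Fin d) × ℝ =>
      ∫ x, f (p.1 + p.2 • x) ∂(stdGaussian d)) = fun p =>
      ((fun p : EuclideanSpace ℝ (Fin d) × ℝ =>
          ∫ x, (f (m + σ • (p.1 + p.2 • x)) - f m) ∂(stdGaussian d)) ∘ L) p +
        (stdGaussian d).real Set.univ • f m := by
    funext p
    have hint : Integrable (fun x => f (p.1 + p.2 • x)) (stdGaussian d) :=
      Integrable.of_bound (Continuous.aestronglyMeasurable (by fun_prop)) Kf
        (Filter.Eventually.of_forall fun x => hf _)
    have e : ∀ x, m + σ • ((L p).1 + (L p).2 • x) = p.1 + p.2 • x := by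
      intro x
      simp only [hL, Prod.smul_fst, Prod.smul_snd, Prod.fst_sub, Prod.snd_sub, smul_add, smul_smul,
        sub_zero, smul_eq_mul]
      rw [← mul_assoc, mul_inv_cancel₀ hσ.ne', one_mul, one_smul]
      abel
    simp only [Function.comp, e]
    rw [integral_sub hint (integrable_const _), integral_const, sub_add_cancel]
  rw [hfun]
  have hbd : ∀ v : EuclideanSpace ℝ (Fin d) × ℝ, ‖v‖ ≤ 1 →
      ‖(G'.comp (σ⁻¹ • ContinuousLinearMap.id ℝ (EuclideanSpace ℝ (Fin d) × ℝ))) v‖ ≤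
        (gsB d * ∫ y, gsW d y) * Kf * σ ^ (γ - 1) := by
    intro v hv
    have : (G'.comp (σ⁻¹ • ContinuousLinearMap.id ℝ (EuclideanSpace ℝ (Fin d) × ℝ))) v =
        σ⁻¹ • G' v := by simp
    rw [this, norm_smul, Real.norm_of_nonneg (inv_nonneg.2 hσ.le), Real.rpow_sub hσ, Real.rpow_one]
    have h2 : ‖G' v‖ ≤ Kf * σ ^ γ * (gsB d * ∫ y, gsW d y) * 1 :=
      (G'.le_opNorm v).trans (mul_le_mul hGn hv (norm_nonneg _) (by positivity))
    calc σ⁻¹ * ‖G' v‖ ≤ σ⁻¹ * (Kf * σ ^ γ * (gsB d * ∫ y, gsW d y) * 1) := by gcongr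
      _ = _ := by ring
  refine ⟨hF.differentiableAt, fun i => ?_, ?_⟩
  · rw [hF.fderiv]
    exact hbd _ (by simp [Prod.norm_def])
  · rw [hF.fderiv]
    exact hbd _ (by simp [Prod.norm_def])
end
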